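/- arXiv:1603.07456 — 2 statements merged into one kernel-verified Lean document; each statement's English description precedes it below -/
import Mathlib

section
/- Let θ > 0, λ = 2θ, and let f ∈ 𝒟(𝒜). Then G_f belongs to the class 𝒟, that is: G_f is continuous on [0,∞), twice continuously differentiable on (0,∞), (G_f)'(0⁺) = 0, (G_f)''(0⁺) exists and is finite, and lim_{x→∞} G_f(x) = 0. -/
open MeasureTheory Real Filter Set

/-- `G lam f y = f 0 · e^{-lam y} + lam · e^{-lam y} · ∫_0^y f(u) e^{lam u} du`. -/
noncomputable def G (lam : ℝ) (f : ℝ → ℝ) (y : ℝ) : ℝ :=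
  f 0 * Real.exp (-lam * y) +
    lam * Real.exp (-lam * y) * ∫ u in (0:ℝ)..y, f u * Real.exp (lam * u)

/-- `f ∈ 𝒟(𝒜)`: `f` is C² on `(0,∞)`, continuous on `[0,∞)` with `lim_{x→∞} f(x) = 0`,
the one-sided limits `f'(0⁺)` and `f''(0⁺)` exist, `f''(0⁺) = 2θ f'(0⁺)`, and
`lim_{x→∞} f''(x) = 0`. -/
def memDA (θ : ℝ) (f : ℝ → ℝ) : Prop :=
  ContDiffOn ℝ 2 f (Set.Ioi 0) ∧ ContinuousOn f (Set.Ici 0) ∧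
  Filter.Tendsto f Filter.atTop (nhds 0) ∧
  (∃ L M : ℝ, Filter.Tendsto (deriv f) (nhdsWithin 0 (Set.Ioi 0)) (nhds L) ∧
    Filter.Tendsto (deriv (deriv f)) (nhdsWithin 0 (Set.Ioi 0)) (nhds M) ∧
    M = 2 * θ * L) ∧
  Filter.Tendsto (deriv (deriv f)) Filter.atTop (nhds 0)

/-!
The function `G lam f` solves the linear equation `g' = lam * (f - g)` on `[0, ∞)` with
`g 0 = f 0`. Hence `g'` vanishes at `0⁺`, and `g'' = lam * (f' - g')` tends to `lam * f'(0⁺)` there.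
For `lam > 0` the equation pulls `g` towards `f`, so `g` inherits the limit of `f` at infinity: if
`f ≤ b` eventually, then `exp (lam * y) * (g y - b)` is eventually nonincreasing.
-/

section

open scoped Topology

section Primitive

variable {E : Type*} [NormedAddCommGroup E] [NormedSpace ℝ E] [CompleteSpace E]
  {f : ℝ → E} {a : ℝ}

lemma hasDerivWithinAt_integral_Ici (hf : ContinuousOn f (Ici a)) {y : ℝ} (hy : a ≤ y) :
    HasDerivWithinAt (fun x ↦ ∫ u in a..x, f u) (f y) (Ici a) y := by
  have hyIcc : y ∈ Icc a (y + 1) := ⟨hy, by linarith⟩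
  have : Fact (y ∈ Icc a (y + 1)) := ⟨hyIcc⟩
  have hcont : ContinuousOn f (Icc a (y + 1)) := hf.mono Icc_subset_Ici_self
  have hint : IntervalIntegrable f volume a y :=
    (hf.mono Icc_subset_Ici_self).intervalIntegrable_of_Icc hy
  have hderiv : HasDerivWithinAt (fun x ↦ ∫ u in a..x, f u) (f y) (Icc a (y + 1)) y :=
    intervalIntegral.integral_hasDerivWithinAt_right hint
      (hcont.stronglyMeasurableAtFilter_nhdsWithin measurableSet_Icc y) (hcont y hyIcc)
  refine hderiv.mono_of_mem_nhdsWithin ?_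
  rw [← Ici_inter_Iic]
  exact inter_mem_nhdsWithin _ (Iic_mem_nhds (lt_add_one y))

lemma contDiffOn_integral_Ioi {n : ℕ∞} (hf : ContDiffOn ℝ n f (Ioi a))
    (hcont : ContinuousOn f (Ici a)) :
    ContDiffOn ℝ (n + 1) (fun x ↦ ∫ u in a..x, f u) (Ioi a) := by
  have hderiv : ∀ y ∈ Ioi a, HasDerivAt (fun x ↦ ∫ u in a..x, f u) (f y) y := fun y hy ↦
    (hasDerivWithinAt_integral_Ici hcont (le_of_lt hy)).hasDerivAt (Ici_mem_nhds hy)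
  rw [contDiffOn_succ_iff_deriv_of_isOpen isOpen_Ioi]
  exact ⟨fun y hy ↦ (hderiv y hy).differentiableAt.differentiableWithinAt,
    fun h ↦ absurd h (by simp), hf.congr fun y hy ↦ (hderiv y hy).deriv⟩

end Primitive

section Relaxation

variable {k b c N : ℝ} {f g g' : ℝ → ℝ}

lemma antitoneOn_exp_mul_sub (hg : ∀ y ∈ Ici N, HasDerivAt g (g' y) y)
    (hle : ∀ y ∈ Ici N, g' y ≤ k * (b - g y)) :
    AntitoneOn (fun y ↦ exp (k * y) * (g y - b)) (Ici N) := by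
  have hderiv : ∀ y ∈ Ici N, HasDerivAt (fun y ↦ exp (k * y) * (g y - b))
      (exp (k * y) * (g' y - k * (b - g y))) y := fun y hy ↦
    (((hasDerivAt_id y).const_mul k).exp.mul ((hg y hy).sub_const b)).congr_deriv (by
      simp only [id_eq]; ring)
  refine antitoneOn_of_hasDerivWithinAt_nonpos (convex_Ici N)
    (fun y hy ↦ (hderiv y hy).continuousAt.continuousWithinAt)
    (fun y hy ↦ (hderiv y (interior_subset hy)).hasDerivWithinAt)
    fun y hy ↦ mul_nonpos_of_nonneg_of_nonpos (exp_pos _).le ?_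
  exact sub_nonpos.2 (hle y (interior_subset hy))

lemma eventually_lt_of_deriv_le_mul_sub (hk : 0 < k) (hbc : b < c)
    (hg : ∀ᶠ y in atTop, HasDerivAt g (g' y) y) (hle : ∀ᶠ y in atTop, g' y ≤ k * (b - g y)) :
    ∀ᶠ y in atTop, g y < c := by
  obtain ⟨N, hN⟩ := eventually_atTop.1 (hg.and hle)
  have hanti := antitoneOn_exp_mul_sub (fun y hy ↦ (hN y hy).1) (fun y hy ↦ (hN y hy).2)
  have hgrowth : Tendsto (fun y ↦ (c - b) * exp (k * y)) atTop atTop :=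
    (tendsto_exp_atTop.comp (tendsto_id.const_mul_atTop hk)).const_mul_atTop (sub_pos.2 hbc)
  filter_upwards [eventually_ge_atTop N,
    hgrowth.eventually_gt_atTop (exp (k * N) * (g N - b))] with y hy hlarge
  have hscaled : exp (k * y) * (g y - b) < exp (k * y) * (c - b) :=
    calc exp (k * y) * (g y - b) ≤ exp (k * N) * (g N - b) := hanti self_mem_Ici hy hy
      _ < (c - b) * exp (k * y) := hlarge
      _ = exp (k * y) * (c - b) := mul_comm _ _
  linarith [lt_of_mul_lt_mul_left hscaled (exp_pos _).le]

lemma eventually_lt_of_hasDerivAt_mul_sub (hk : 0 < k)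
    (hg : ∀ᶠ y in atTop, HasDerivAt g (k * (f y - g y)) y) (hf : Tendsto f atTop (𝓝 b))
    (hbc : b < c) : ∀ᶠ y in atTop, g y < c := by
  obtain ⟨d, hbd, hdc⟩ := exists_between hbc
  refine eventually_lt_of_deriv_le_mul_sub hk hdc hg ?_
  filter_upwards [hf.eventually_lt_const hbd] with y hy
  gcongr

lemma tendsto_atTop_of_hasDerivAt_mul_sub (hk : 0 < k)
    (hg : ∀ᶠ y in atTop, HasDerivAt g (k * (f y - g y)) y) (hf : Tendsto f atTop (𝓝 b)) :
    Tendsto g atTop (𝓝 b) := by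
  refine tendsto_order.2 ⟨fun c hc ↦ ?_, fun c ↦ eventually_lt_of_hasDerivAt_mul_sub hk hg hf⟩
  have hneg : ∀ᶠ y in atTop, HasDerivAt (-g) (k * ((-f) y - (-g) y)) y :=
    hg.mono fun y hy ↦ hy.neg.congr_deriv (by simp only [Pi.neg_apply]; ring)
  exact (eventually_lt_of_hasDerivAt_mul_sub hk hneg hf.neg (neg_lt_neg hc)).mono
    fun y ↦ neg_lt_neg_iff.1

end Relaxation

variable {lam : ℝ} {f : ℝ → ℝ}

lemma G_zero (lam : ℝ) (f : ℝ → ℝ) : G lam f 0 = f 0 := by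
  simp [G]

lemma hasDerivWithinAt_G (hf : ContinuousOn f (Ici 0)) {y : ℝ} (hy : 0 ≤ y) :
    HasDerivWithinAt (G lam f) (lam * (f y - G lam f y)) (Ici 0) y := by
  have hint : HasDerivWithinAt (fun x ↦ ∫ u in (0 : ℝ)..x, f u * exp (lam * u))
      (f y * exp (lam * y)) (Ici 0) y :=
    hasDerivWithinAt_integral_Ici (hf.mul (by fun_prop)) hy
  have hexp : HasDerivWithinAt (fun x ↦ exp (-lam * x)) (exp (-lam * y) * (-lam * 1)) (Ici 0) y :=
    ((hasDerivWithinAt_id y _).const_mul (-lam)).exp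
  have hcancel : exp (-lam * y) * exp (lam * y) = 1 := by
    rw [← exp_add, neg_mul, neg_add_cancel, exp_zero]
  refine ((hexp.const_mul (f 0)).add ((hexp.const_mul lam).mul hint)).congr_deriv ?_
  simp only [G]
  linear_combination lam * f y * hcancel

lemma hasDerivAt_G (hf : ContinuousOn f (Ici 0)) {y : ℝ} (hy : 0 < y) :
    HasDerivAt (G lam f) (lam * (f y - G lam f y)) y :=
  (hasDerivWithinAt_G hf hy.le).hasDerivAt (Ici_mem_nhds hy)

lemma continuousOn_G (hf : ContinuousOn f (Ici 0)) : ContinuousOn (G lam f) (Ici 0) :=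
  fun _ hy ↦ (hasDerivWithinAt_G hf hy).continuousWithinAt

lemma contDiffOn_G {n : ℕ∞} (hf : ContDiffOn ℝ n f (Ioi 0)) (hcont : ContinuousOn f (Ici 0)) :
    ContDiffOn ℝ (n + 1) (G lam f) (Ioi 0) := by
  have hint : ContDiffOn ℝ (n + 1) (fun x ↦ ∫ u in (0 : ℝ)..x, f u * exp (lam * u)) (Ioi 0) :=
    contDiffOn_integral_Ioi (hf.mul (by fun_prop)) (hcont.mul (by fun_prop))
  have hexp : ContDiffOn ℝ (n + 1) (fun x ↦ exp (-lam * x)) (Ioi 0) := by fun_prop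
  exact (contDiffOn_const.mul hexp).add ((contDiffOn_const.mul hexp).mul hint)

lemma tendsto_deriv_G_nhdsGT_zero (hf : ContinuousOn f (Ici 0)) :
    Tendsto (deriv (G lam f)) (𝓝[>] 0) (𝓝 0) := by
  have hrhs : ContinuousOn (fun y ↦ lam * (f y - G lam f y)) (Ici 0) :=
    continuousOn_const.mul (hf.sub (continuousOn_G hf))
  have hlim := (hrhs 0 self_mem_Ici).tendsto.mono_left (nhdsWithin_mono 0 Ioi_subset_Ici_self)
  rw [G_zero, sub_self, mul_zero] at hlim
  exact hlim.congr' (eventually_mem_nhdsWithin.mono fun y hy ↦ (hasDerivAt_G hf hy).deriv.symm)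

lemma deriv_deriv_G (hf : ContinuousOn f (Ici 0)) {y : ℝ} (hy : 0 < y)
    (hdiff : DifferentiableAt ℝ f y) :
    deriv (deriv (G lam f)) y = lam * (deriv f y - deriv (G lam f) y) := by
  have heq : deriv (G lam f) =ᶠ[𝓝 y] fun x ↦ lam * (f x - G lam f x) :=
    (eventually_gt_nhds hy).mono fun x hx ↦ (hasDerivAt_G hf hx).deriv
  rw [heq.deriv_eq]
  have hG : DifferentiableAt ℝ (G lam f) y := (hasDerivAt_G hf hy).differentiableAt
  exact ((hdiff.hasDerivAt.sub hG.hasDerivAt).const_mul lam).deriv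

lemma tendsto_deriv_deriv_G_nhdsGT_zero (hf : ContinuousOn f (Ici 0))
    (hdiff : DifferentiableOn ℝ f (Ioi 0)) {L : ℝ} (hL : Tendsto (deriv f) (𝓝[>] 0) (𝓝 L)) :
    Tendsto (deriv (deriv (G lam f))) (𝓝[>] 0) (𝓝 (lam * L)) := by
  have hlim := (hL.sub (tendsto_deriv_G_nhdsGT_zero (lam := lam) hf)).const_mul lam
  rw [sub_zero] at hlim
  exact hlim.congr' (eventually_mem_nhdsWithin.mono fun y hy ↦
    (deriv_deriv_G hf hy (hdiff.differentiableAt (Ioi_mem_nhds hy))).symm)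

lemma tendsto_G_atTop (hlam : 0 < lam) (hf : ContinuousOn f (Ici 0)) {b : ℝ}
    (hb : Tendsto f atTop (𝓝 b)) : Tendsto (G lam f) atTop (𝓝 b) :=
  tendsto_atTop_of_hasDerivAt_mul_sub hlam
    ((eventually_gt_atTop 0).mono fun _ ↦ hasDerivAt_G hf) hb

theorem G_mem_D_general {L b : ℝ} (hlam : 0 < lam) (hC1 : ContDiffOn ℝ 1 f (Ioi 0))
    (hcont : ContinuousOn f (Ici 0)) (hL : Tendsto (deriv f) (𝓝[>] 0) (𝓝 L))
    (hb : Tendsto f atTop (𝓝 b)) :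
    ContinuousOn (G lam f) (Ici 0) ∧
    ContDiffOn ℝ 2 (G lam f) (Ioi 0) ∧
    Tendsto (deriv (G lam f)) (𝓝[>] 0) (𝓝 0) ∧
    (∃ M : ℝ, Tendsto (deriv (deriv (G lam f))) (𝓝[>] 0) (𝓝 M)) ∧
    Tendsto (G lam f) atTop (𝓝 b) :=
  ⟨continuousOn_G hcont, by simpa [one_add_one_eq_two] using contDiffOn_G (n := 1) hC1 hcont,
    tendsto_deriv_G_nhdsGT_zero hcont,
    ⟨lam * L, tendsto_deriv_deriv_G_nhdsGT_zero hcont (hC1.differentiableOn one_ne_zero) hL⟩,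
    tendsto_G_atTop hlam hcont hb⟩

end

/-- For `f ∈ 𝒟(𝒜)`, the function `G_f` belongs to the class `𝒟`: it is continuous on `[0,∞)`,
twice continuously differentiable on `(0,∞)`, `(G_f)'(0⁺) = 0`, `(G_f)''(0⁺)` exists and is
finite, and `lim_{x→∞} G_f(x) = 0`. -/
theorem G_mem_D (θ lam : ℝ) (hθ : 0 < θ) (hlam : lam = 2 * θ)
    (f : ℝ → ℝ) (hf : memDA θ f) :
    ContinuousOn (G lam f) (Set.Ici 0) ∧
    ContDiffOn ℝ 2 (G lam f) (Set.Ioi 0) ∧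
    Filter.Tendsto (deriv (G lam f)) (nhdsWithin 0 (Set.Ioi 0)) (nhds 0) ∧
    (∃ M : ℝ, Filter.Tendsto (deriv (deriv (G lam f))) (nhdsWithin 0 (Set.Ioi 0)) (nhds M)) ∧
    Filter.Tendsto (G lam f) Filter.atTop (nhds 0) := by
  obtain ⟨hC2, hcont, hlim, ⟨L, -, hL, -, -⟩, -⟩ := hf
  exact G_mem_D_general (by linarith) (hC2.of_le one_le_two) hcont hL hlim
end

section
/- Let θ > 0, t > 0 and f ∈ 𝒮. Then P_t f is differentiable on (0,∞), has a right derivative at 0, and for every x ≥ 0, (P_t f)'(x) = −∫_0^∞ p_t'(0, y−x)·f(y) dy − ∫_0^∞ p_t'(0, x+y)·f(y) dy + 2·∫_0^∞ g_t'(x+y)·f(y) dy + (1/θ)·g_t'(x)·f(0), where p_t'(0,z) = −(z/t)·(2πt)^{−1/2}·e^{−z²/(2t)} denotes the derivative of z ↦ p_t(0,z). -/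
open MeasureTheory Real Filter Set

/-- Complementary error function `erfc(x) = (2/√π)·∫_x^∞ e^{−y²} dy`. -/
noncomputable def erfc (x : ℝ) : ℝ :=
  (2 / Real.sqrt Real.pi) * ∫ y in Set.Ioi x, Real.exp (-y ^ 2)

/-- `g_t(x) = θ·exp(2θx + 2θ²t)·erfc(x/√(2t) + θ·√(2t))`. -/
noncomputable def gfun (θ t x : ℝ) : ℝ :=
  θ * Real.exp (2 * θ * x + 2 * θ ^ 2 * t) *
    erfc (x / Real.sqrt (2 * t) + θ * Real.sqrt (2 * t))

/-- The Gaussian kernel `p_t(x,y) = (2πt)^{−1/2}·exp(−(y−x)²/(2t))`. -/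
noncomputable def pker (t x y : ℝ) : ℝ :=
  (Real.sqrt (2 * Real.pi * t))⁻¹ * Real.exp (-(y - x) ^ 2 / (2 * t))

/-- The sticky Brownian motion semigroup:
`P_t f(x) = ∫_0^∞ (p_t(x,y) − p_t(x,−y) + 2 g_t(x+y)) f(y) dy + (1/θ) g_t(x) f(0)`. -/
noncomputable def Pt (θ t : ℝ) (f : ℝ → ℝ) (x : ℝ) : ℝ :=
  (∫ y in Set.Ioi (0:ℝ), (pker t x y - pker t x (-y) + 2 * gfun θ t (x + y)) * f y)
    + (1 / θ) * gfun θ t x * f 0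

/-- `f ∈ 𝒮`: `f` is C² on `(0,∞)`, the one-sided limits `f(0⁺)`, `f'(0⁺)`, `f''(0⁺)` exist
and are finite, and `lim_{x→∞} f(x) = 0`. -/
def memS (f : ℝ → ℝ) : Prop :=
  ContDiffOn ℝ 2 f (Set.Ioi 0) ∧
  (∃ a : ℝ, Filter.Tendsto f (nhdsWithin 0 (Set.Ioi 0)) (nhds a)) ∧
  (∃ b : ℝ, Filter.Tendsto (deriv f) (nhdsWithin 0 (Set.Ioi 0)) (nhds b)) ∧
  (∃ c : ℝ, Filter.Tendsto (deriv (deriv f)) (nhdsWithin 0 (Set.Ioi 0)) (nhds c)) ∧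
  Filter.Tendsto f Filter.atTop (nhds 0)

/-- The derivative of `z ↦ p_t(0,z)`: `p_t'(0,z) = −(z/t)·(2πt)^{−1/2}·e^{−z²/(2t)}`. -/
noncomputable def pder (t z : ℝ) : ℝ :=
  -(z / t) * (Real.sqrt (2 * Real.pi * t))⁻¹ * Real.exp (-z ^ 2 / (2 * t))

/-!
The kernels `p_t(0,·)`, `p_t'(0,·)` and `g_t` decay faster than every exponential, so each integral in
`P_t f` may be differentiated under the integral sign along translates of its kernel, for every `f`
of at most exponential growth. The bound on `g_t'` comes for free from the differential equation
`g_t' = 2θ(g_t − p_t(0,·))`: in the derivative of `g_t`, the Gaussian produced by `erfc` and the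
exponential prefactor combine into a multiple of `p_t(0,·)`.
-/

open Asymptotics Topology

section Translates

variable {E : Type*} [NormedAddCommGroup E] [NormedSpace ℝ E] {μ : Measure ℝ} {a : ℝ}
  {k k' : ℝ → ℝ} {f : ℝ → E}

theorem integrable_comp_add_smul (hk : Continuous k) (hk_exp : k =O[⊤] fun z => exp (-a * z))
    (hf : Integrable (fun y => exp (-a * y) • f y) μ) (c : ℝ) :
    Integrable (fun y => k (y + c) • f y) μ := by
  obtain ⟨C, hC⟩ := isBigO_top.1 hk_exp
  have hbound (y : ℝ) : ‖exp (a * y) * k (y + c)‖ ≤ C * exp (-a * c) := by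
    calc ‖exp (a * y) * k (y + c)‖ = exp (a * y) * ‖k (y + c)‖ := by simp
      _ ≤ exp (a * y) * (C * ‖exp (-a * (y + c))‖) := by gcongr; exact hC _
      _ = C * exp (-a * c) := by
        rw [norm_of_nonneg (exp_pos _).le, mul_left_comm, ← exp_add]
        ring_nf
  refine (hf.bdd_smul (φ := fun y => exp (a * y) * k (y + c)) _
    (by fun_prop) (.of_forall hbound)).congr (.of_forall fun y => ?_)
  simp only [Pi.smul_apply', smul_smul]
  rw [mul_right_comm, ← exp_add]
  simp

theorem hasDerivAt_integral_comp_add_smul (hk : ∀ z, HasDerivAt k (k' z) z) (hk' : Continuous k')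
    (hk_exp : k =O[⊤] fun z => exp (-a * z)) (hk'_exp : k' =O[⊤] fun z => exp (-a * z))
    (hf : Integrable (fun y => exp (-a * y) • f y) μ) (c : ℝ) :
    HasDerivAt (fun c => ∫ y, k (y + c) • f y ∂μ) (∫ y, k' (y + c) • f y ∂μ) c := by
  have hk_cont : Continuous k := continuous_iff_continuousAt.2 fun z => (hk z).continuousAt
  have hint := integrable_comp_add_smul hk_cont hk_exp hf
  have hint' := integrable_comp_add_smul hk' hk'_exp hf
  obtain ⟨C, C_pos, hC⟩ := hk'_exp.exists_pos
  rw [isBigOWith_top] at hC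
  have hshift (d : ℝ) (hd : d ∈ Metric.ball c 1) : exp (-a * d) ≤ exp (|a| * (|c| + 1)) := by
    rw [Metric.mem_ball, Real.dist_eq] at hd
    rw [exp_le_exp]
    calc -a * d ≤ |-a * d| := le_abs_self _
      _ = |a| * |d| := by rw [abs_mul, abs_neg]
      _ ≤ |a| * (|c| + 1) := by gcongr; linarith [abs_sub_abs_le_abs_sub d c]
  have hbound (y d : ℝ) (hd : d ∈ Metric.ball c 1) :
      ‖k' (y + d) • f y‖ ≤ C * exp (|a| * (|c| + 1)) * ‖exp (-a * y) • f y‖ := by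
    calc ‖k' (y + d) • f y‖ ≤ C * exp (-a * (y + d)) * ‖f y‖ := by
          rw [norm_smul]
          gcongr
          simpa using hC (y + d)
      _ = C * exp (-a * d) * ‖exp (-a * y) • f y‖ := by
          rw [norm_smul, norm_of_nonneg (exp_pos _).le, mul_add, exp_add]
          ring
      _ ≤ C * exp (|a| * (|c| + 1)) * ‖exp (-a * y) • f y‖ := by
          gcongr ?_ * _
          exact mul_le_mul_of_nonneg_left (hshift d hd) C_pos.le
  exact (hasDerivAt_integral_of_dominated_loc_of_deriv_le (Metric.ball_mem_nhds c one_pos)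
    (.of_forall fun d => (hint d).aestronglyMeasurable) (hint c) (hint' c).aestronglyMeasurable
    (.of_forall hbound) (hf.norm.const_mul _)
    (.of_forall fun y d _ => ((hk (y + d)).comp_const_add y d).smul_const (f y))).2

end Translates

section ExponentialWeights

variable {E : Type*} [NormedAddCommGroup E] [NormedSpace ℝ E] {a b c : ℝ} {f : ℝ → E}

theorem integrableOn_Ioi_exp_smul_mono (hab : a ≤ b)
    (hf : IntegrableOn (fun y => exp (-a * y) • f y) (Ioi c)) :
    IntegrableOn (fun y => exp (-b * y) • f y) (Ioi c) := by
  have hbound : ∀ᵐ y ∂volume.restrict (Ioi c), ‖exp (-(b - a) * y)‖ ≤ exp (-(b - a) * c) := by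
    filter_upwards [ae_restrict_mem measurableSet_Ioi] with y hy
    rw [norm_of_nonneg (exp_pos _).le, exp_le_exp]
    exact mul_le_mul_of_nonpos_left (le_of_lt hy) (by linarith)
  refine (Integrable.bdd_smul hf _ (by fun_prop) hbound).congr (.of_forall fun y => ?_)
  simp only [Pi.smul_apply', smul_smul, ← exp_add]
  ring_nf

theorem integrableOn_Ioi_exp_smul {l : E} (ha : 0 < a) (hf : ContinuousOn f (Ioi c))
    (hc : Tendsto f (𝓝[>] c) (𝓝 l)) (htop : f =O[atTop] fun _ => (1 : ℝ)) :
    IntegrableOn (fun y => exp (-a * y) • f y) (Ioi c) := by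
  have hcont : ContinuousOn (fun y => exp (-a * y) • f y) (Ioi c) := by fun_prop
  refine integrableOn_Ioi_iff_integrableAtFilter_atTop_nhdsWithin.2 ⟨?_, ?_,
    hcont.locallyIntegrableOn measurableSet_Ioi⟩
  · have hdecay : (fun y => exp (-a * y) • f y) =O[atTop] fun y => exp (-a * y) := by
      simpa using (isBigO_refl (fun y => exp (-a * y)) atTop).smul htop
    exact hdecay.integrableAtFilter
      ⟨Ioi c, Ioi_mem_atTop c, hcont.aestronglyMeasurable measurableSet_Ioi⟩
      ⟨Ioi c, Ioi_mem_atTop c, integrableOn_exp_mul_Ioi (neg_lt_zero.2 ha) c⟩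
  · have hexp : Tendsto (fun y => exp (-a * y)) (𝓝[>] c) (𝓝 (exp (-a * c))) :=
      Continuous.continuousWithinAt (by fun_prop)
    exact (volume.finiteAt_nhdsWithin c (Ioi c)).integrableAtFilter_of_tendsto
      ⟨Ioi c, self_mem_nhdsWithin, hcont.aestronglyMeasurable measurableSet_Ioi⟩ (hexp.smul hc)

end ExponentialWeights

section TailIntegrals

variable {E : Type*} [NormedAddCommGroup E] [NormedSpace ℝ E] {f : ℝ → E}

theorem hasDerivAt_integral_Ioi [CompleteSpace E] {x : ℝ} (hf : Continuous f)
    (hint : IntegrableOn f (Ioi x)) :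
    HasDerivAt (fun u => ∫ y in Ioi u, f y) (-f x) x := by
  have hsplit : (fun u => ∫ y in Ioi u, f y) = fun u => (∫ y in u..x, f y) + ∫ y in Ioi x, f y :=
    funext fun u =>
      (intervalIntegral.integral_interval_add_Ioi' (hf.intervalIntegrable u x) hint).symm
  rw [hsplit]
  exact (intervalIntegral.integral_hasDerivAt_left (hf.intervalIntegrable x x)
    (hf.stronglyMeasurableAtFilter _ _) hf.continuousAt).add_const _

theorem isBigO_integral_Ioi_exp {a : ℝ} (ha : 0 < a) (hf : f =O[⊤] fun y => exp (-a * y)) :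
    (fun x => ∫ y in Ioi x, f y) =O[⊤] fun x => exp (-a * x) := by
  obtain ⟨C, hC⟩ := isBigO_top.1 hf
  refine isBigO_top.2 ⟨C / a, fun x => ?_⟩
  calc ‖∫ y in Ioi x, f y‖ ≤ ∫ y in Ioi x, C * exp (-a * y) :=
        norm_integral_le_of_norm_le ((integrableOn_exp_mul_Ioi (neg_lt_zero.2 ha) x).const_mul C)
          (.of_forall fun y => by simpa using hC y)
    _ = C / a * ‖exp (-a * x)‖ := by
        rw [integral_const_mul, integral_exp_mul_Ioi (neg_lt_zero.2 ha),
          norm_of_nonneg (exp_pos _).le, neg_div_neg_eq, mul_div_assoc', div_mul_eq_mul_div]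

end TailIntegrals

theorem pow_mul_exp_neg_mul_sq_isBigO_exp (n : ℕ) {b : ℝ} (hb : 0 < b) (a : ℝ) :
    (fun x : ℝ => x ^ n * exp (-b * x ^ 2)) =O[⊤] fun x => exp (-a * x) := by
  refine isBigO_top.2 ⟨n.factorial * exp ((|a| + 1) ^ 2 / (4 * b)), fun x => ?_⟩
  have hpow : |x| ^ n ≤ n.factorial * exp |x| := by
    rw [← div_le_iff₀' (by positivity)]
    exact pow_div_factorial_le_exp _ (abs_nonneg x) n
  have hsquare : |x| + -b * x ^ 2 ≤ (|a| + 1) ^ 2 / (4 * b) + -a * x := by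
    have hsq : (|a| + 1) * |x| - b * |x| ^ 2 ≤ (|a| + 1) ^ 2 / (4 * b) := by
      rw [le_div_iff₀ (by positivity)]
      nlinarith [sq_nonneg (|a| + 1 - 2 * b * |x|)]
    have hax : a * x ≤ |a| * |x| := abs_mul a x ▸ le_abs_self _
    rw [sq_abs] at hsq
    linarith
  calc ‖x ^ n * exp (-b * x ^ 2)‖ = |x| ^ n * exp (-b * x ^ 2) := by simp
    _ ≤ n.factorial * exp |x| * exp (-b * x ^ 2) := by gcongr
    _ = n.factorial * exp (|x| + -b * x ^ 2) := by rw [exp_add, mul_assoc]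
    _ ≤ n.factorial * exp ((|a| + 1) ^ 2 / (4 * b) + -a * x) := by gcongr
    _ = n.factorial * exp ((|a| + 1) ^ 2 / (4 * b)) * ‖exp (-a * x)‖ := by
      rw [exp_add, norm_of_nonneg (exp_pos _).le, mul_assoc]

theorem hasDerivAt_erfc (x : ℝ) : HasDerivAt erfc (-(2 / √π * exp (-x ^ 2))) x := by
  have hint : Integrable fun y : ℝ => exp (-y ^ 2) := by
    simpa using integrable_exp_neg_mul_sq one_pos
  rw [← mul_neg]
  exact (hasDerivAt_integral_Ioi (by fun_prop) hint.integrableOn).const_mul (2 / √π)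

theorem erfc_isBigO_exp {a : ℝ} (ha : 0 < a) : erfc =O[⊤] fun x => exp (-a * x) := by
  have hgauss : (fun y : ℝ => exp (-y ^ 2)) =O[⊤] fun y => exp (-a * y) := by
    simpa using pow_mul_exp_neg_mul_sq_isBigO_exp 0 one_pos a
  exact (isBigO_integral_Ioi_exp ha hgauss).const_mul_left (2 / √π)

section Kernels

variable {t : ℝ}

theorem pker_eq_pker_zero_sub (t x y : ℝ) : pker t x y = pker t 0 (y - x) := by
  simp only [pker, sub_zero]

theorem hasDerivAt_pker_zero (ht : t ≠ 0) (z : ℝ) : HasDerivAt (pker t 0) (pder t z) z := by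
  have hexponent : HasDerivAt (fun z : ℝ => -(z - 0) ^ 2 / (2 * t)) (-(z / t)) z := by
    refine ((((hasDerivAt_id z).sub_const 0).pow 2).neg.div_const (2 * t)).congr_deriv ?_
    simp only [id, sub_zero]
    field_simp
    simp
  refine (hexponent.exp.const_mul (√(2 * π * t))⁻¹).congr_deriv ?_
  simp only [pder, sub_zero]
  ring

theorem pker_zero_isBigO_exp (ht : 0 < t) (a : ℝ) : pker t 0 =O[⊤] fun z => exp (-a * z) := by
  refine ((pow_mul_exp_neg_mul_sq_isBigO_exp 0 (inv_pos.2 (mul_pos two_pos ht)) a).const_mul_left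
    (√(2 * π * t))⁻¹).congr_left fun z => ?_
  simp only [pker]
  ring_nf

theorem pder_isBigO_exp (ht : 0 < t) (a : ℝ) : pder t =O[⊤] fun z => exp (-a * z) := by
  refine ((pow_mul_exp_neg_mul_sq_isBigO_exp 1 (inv_pos.2 (mul_pos two_pos ht)) a).const_mul_left
    (-(t⁻¹ * (√(2 * π * t))⁻¹))).congr_left fun z => ?_
  simp only [pder]
  ring_nf

theorem continuous_pder (t : ℝ) : Continuous (pder t) := by
  unfold pder
  fun_prop

theorem continuous_pker_zero (t : ℝ) : Continuous (pker t 0) := by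
  unfold pker
  fun_prop

theorem exp_mul_exp_neg_sq (ht : 0 < t) (θ x : ℝ) :
    exp (2 * θ * x + 2 * θ ^ 2 * t) * exp (-(x / √(2 * t) + θ * √(2 * t)) ^ 2) =
      exp (-x ^ 2 / (2 * t)) := by
  have hsqrt : √(2 * t) ^ 2 = 2 * t := sq_sqrt (by positivity)
  rw [← exp_add, add_sq, div_pow, mul_pow, hsqrt]
  congr 1
  field_simp
  ring

theorem hasDerivAt_gfun (ht : 0 < t) (θ x : ℝ) :
    HasDerivAt (gfun θ t) (2 * θ * (gfun θ t x - pker t 0 x)) x := by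
  have hargument : HasDerivAt (fun x => x / √(2 * t) + θ * √(2 * t)) (1 / √(2 * t)) x :=
    ((hasDerivAt_id x).div_const _).add_const _
  have hexponent : HasDerivAt (fun x => 2 * θ * x + 2 * θ ^ 2 * t) (2 * θ) x := by
    simpa using ((hasDerivAt_id x).const_mul (2 * θ)).add_const (2 * θ ^ 2 * t)
  have hconst : 2 / √π * (1 / √(2 * t)) = 2 * (√(2 * π * t))⁻¹ := by
    rw [mul_right_comm 2 π t, mul_comm (2 * t), sqrt_mul pi_pos.le]
    field_simp
  refine ((hexponent.exp.const_mul θ).mul ((hasDerivAt_erfc _).comp x hargument)).congr_deriv ?_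
  simp only [gfun, pker, sub_zero, Function.comp_apply]
  linear_combination (-θ * (2 / √π) * (1 / √(2 * t))) * exp_mul_exp_neg_sq ht θ x
    - θ * exp (-x ^ 2 / (2 * t)) * hconst

theorem deriv_gfun (ht : 0 < t) (θ : ℝ) :
    deriv (gfun θ t) = fun x => 2 * θ * (gfun θ t x - pker t 0 x) :=
  funext fun x => (hasDerivAt_gfun ht θ x).deriv

theorem continuous_gfun (ht : 0 < t) (θ : ℝ) : Continuous (gfun θ t) :=
  continuous_iff_continuousAt.2 fun x => (hasDerivAt_gfun ht θ x).continuousAt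

theorem continuous_deriv_gfun (ht : 0 < t) (θ : ℝ) : Continuous (deriv (gfun θ t)) := by
  rw [deriv_gfun ht]
  exact ((continuous_gfun ht θ).sub (continuous_pker_zero t)).const_mul _

theorem gfun_isBigO_exp {θ a : ℝ} (ht : 0 < t) (ha : 0 < a + 2 * θ) :
    gfun θ t =O[⊤] fun x => exp (-a * x) := by
  have hs : 0 < √(2 * t) := by positivity
  have herfc := (erfc_isBigO_exp (mul_pos ha hs)).comp_tendsto
    (tendsto_top (f := fun x => x / √(2 * t) + θ * √(2 * t)) (l := ⊤))
  refine (((isBigO_refl (fun x => exp (2 * θ * x + 2 * θ ^ 2 * t)) ⊤).const_mul_left θ).mul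
    herfc).trans (isBigO_top.2 ⟨exp (2 * θ ^ 2 * t - (a + 2 * θ) * θ * √(2 * t) ^ 2), fun x => ?_⟩)
  simp only [Function.comp_apply, ← exp_add, norm_eq_abs, abs_exp]
  refine le_of_eq (congrArg exp ?_)
  field_simp
  ring

theorem deriv_gfun_isBigO_exp {θ a : ℝ} (ht : 0 < t) (ha : 0 < a + 2 * θ) :
    deriv (gfun θ t) =O[⊤] fun x => exp (-a * x) := by
  rw [deriv_gfun ht]
  exact ((gfun_isBigO_exp ht ha).sub (pker_zero_isBigO_exp ht a)).const_mul_left (2 * θ)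

end Kernels

section Semigroup

variable {θ t a : ℝ} {f : ℝ → ℝ}

theorem Pt_eq_integral_translates (ht : 0 < t) (ha : 0 < a + 2 * θ)
    (hf : IntegrableOn (fun y => exp (-a * y) * f y) (Ioi 0)) (x : ℝ) :
    Pt θ t f x = (∫ y in Ioi 0, pker t 0 (y + -x) * f y) - (∫ y in Ioi 0, pker t 0 (y + x) * f y)
      + 2 * (∫ y in Ioi 0, gfun θ t (y + x) * f y) + (1 / θ) * gfun θ t x * f 0 := by
  have hp (c : ℝ) : IntegrableOn (fun y => pker t 0 (y + c) * f y) (Ioi 0) :=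
    integrable_comp_add_smul (continuous_pker_zero t) (pker_zero_isBigO_exp ht a) hf c
  have hg : IntegrableOn (fun y => gfun θ t (y + x) * f y) (Ioi 0) :=
    integrable_comp_add_smul (continuous_gfun ht θ) (gfun_isBigO_exp ht ha) hf x
  have hdiff : IntegrableOn
      (fun y => pker t 0 (y + -x) * f y - pker t 0 (y + x) * f y) (Ioi 0) := (hp (-x)).sub (hp x)
  rw [Pt, ← integral_const_mul, ← integral_sub (hp (-x)) (hp x),
    ← integral_add hdiff (hg.const_mul 2)]
  congr 2 with y
  rw [pker_eq_pker_zero_sub t x y, pker_eq_pker_zero_sub t x (-y), add_comm x y]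
  simp only [pker]
  ring_nf

theorem memS.integrableOn_exp_mul (hf : memS f) (ha : 0 < a) :
    IntegrableOn (fun y => exp (-a * y) * f y) (Ioi 0) := by
  obtain ⟨hsmooth, ⟨_, hzero⟩, -, -, htop⟩ := hf
  exact integrableOn_Ioi_exp_smul ha hsmooth.continuousOn hzero (htop.isBigO_one ℝ)

theorem Pt_deriv_general (_hθ : θ ≠ 0) (ht : 0 < t)
    (hf : IntegrableOn (fun y => exp (-a * y) * f y) (Ioi 0)) (x : ℝ) :
    HasDerivAt (Pt θ t f)
      (-(∫ y in Ioi 0, pder t (y - x) * f y) - (∫ y in Ioi 0, pder t (x + y) * f y)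
        + 2 * (∫ y in Ioi 0, deriv (gfun θ t) (x + y) * f y)
        + (1 / θ) * deriv (gfun θ t) x * f 0) x := by
  obtain ⟨b, hab, hb⟩ : ∃ b, a ≤ b ∧ 0 < b + 2 * θ :=
    ⟨max a (1 - 2 * θ), le_max_left _ _, by linarith [le_max_right a (1 - 2 * θ)]⟩
  have hfb : IntegrableOn (fun y => exp (-b * y) * f y) (Ioi 0) :=
    integrableOn_Ioi_exp_smul_mono hab hf
  have hg (z : ℝ) : HasDerivAt (gfun θ t) (deriv (gfun θ t) z) z :=
    (hasDerivAt_gfun ht θ z).differentiableAt.hasDerivAt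
  have hp_integral (c : ℝ) : HasDerivAt (fun c => ∫ y in Ioi 0, pker t 0 (y + c) * f y)
      (∫ y in Ioi 0, pder t (y + c) * f y) c :=
    hasDerivAt_integral_comp_add_smul (hasDerivAt_pker_zero ht.ne') (continuous_pder t)
      (pker_zero_isBigO_exp ht b) (pder_isBigO_exp ht b) hfb c
  have hp_integral_neg : HasDerivAt (fun x => ∫ y in Ioi 0, pker t 0 (y + -x) * f y)
      (-∫ y in Ioi 0, pder t (y - x) * f y) x := by
    simpa [sub_eq_add_neg] using (hp_integral (0 - x)).comp_const_sub 0 x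
  have hg_integral : HasDerivAt (fun x => ∫ y in Ioi 0, gfun θ t (y + x) * f y)
      (∫ y in Ioi 0, deriv (gfun θ t) (y + x) * f y) x :=
    hasDerivAt_integral_comp_add_smul hg (continuous_deriv_gfun ht θ)
      (gfun_isBigO_exp ht hb) (deriv_gfun_isBigO_exp ht hb) hfb x
  rw [funext (Pt_eq_integral_translates ht hb hfb)]
  simp only [add_comm x]
  exact ((hp_integral_neg.sub (hp_integral x)).add
    (hg_integral.const_mul 2)).add (((hg x).const_mul (1 / θ)).mul_const (f 0))

end Semigroup

/-- For `f ∈ 𝒮`, `P_t f` is differentiable on `(0,∞)`, has a right derivative at `0`, and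
`(P_t f)'(x) = −∫_0^∞ p_t'(0,y−x) f(y) dy − ∫_0^∞ p_t'(0,x+y) f(y) dy
  + 2 ∫_0^∞ g_t'(x+y) f(y) dy + (1/θ) g_t'(x) f(0)` for every `x ≥ 0`. -/
theorem Pt_deriv (θ t : ℝ) (hθ : 0 < θ) (ht : 0 < t)
    (f : ℝ → ℝ) (hf : memS f) :
    ∀ x : ℝ, 0 ≤ x →
      HasDerivWithinAt (Pt θ t f)
        (-(∫ y in Set.Ioi (0:ℝ), pder t (y - x) * f y)
          - (∫ y in Set.Ioi (0:ℝ), pder t (x + y) * f y)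
          + 2 * (∫ y in Set.Ioi (0:ℝ), deriv (gfun θ t) (x + y) * f y)
          + (1 / θ) * deriv (gfun θ t) x * f 0) (Set.Ici 0) x ∧
      (0 < x → HasDerivAt (Pt θ t f)
        (-(∫ y in Set.Ioi (0:ℝ), pder t (y - x) * f y)
          - (∫ y in Set.Ioi (0:ℝ), pder t (x + y) * f y)
          + 2 * (∫ y in Set.Ioi (0:ℝ), deriv (gfun θ t) (x + y) * f y)
          + (1 / θ) * deriv (gfun θ t) x * f 0) x) := by
  intro x _
  have hderiv := Pt_deriv_general hθ.ne' ht (hf.integrableOn_exp_mul one_pos) x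
  exact ⟨hderiv.hasDerivWithinAt, fun _ => hderiv⟩
end
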